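/- For every integer t with 1 ≤ t ≤ 28 there exists a linear code over the field with 32 elements of length 87, dimension 2t, minimum distance at least 87 − 3t − 3 = 84 − 3t, and locality 2. -/

import Mathlib

/-!
The elliptic curve of the paper can be replaced by the `x`-line, with the cyclic cubic cover given
by the Shanks cubic `z³ - f z² - (f + 3) z - 1` for `f = 1 / j` and `j = (x² + x + 1)³ / (x² + x)²`.
If `x ∈ 𝔽₃₂` is not `0` or `1`, then `y = x² + x` is a nonzero element of trace `0`, which means
`j⁵ + j⁴ + j³ + j + 1 = 0`, and this relation makes `j² + j` a root of the cubic. So all 30 such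
fibres split, the other two roots being obtained from the first by iterating `z ↦ -1 / (z + 1)`.

A codeword consists of the values of `a(x) - b(x) z`, with `a` and `b` of degree less than `t`, at
the three points of each fibre. The norm of this function, after clearing denominators, is a
polynomial in `x` of degree at most `3 t + 3` whose multiplicity at a point bounds the number of
zeros in the fibre. It is not the zero polynomial because the fibre over `x = 0` is inert. Two
values in a fibre determine `a(x)` and `b(x)`, hence the third value.
-/

open Polynomial Finset

section BinaryForm

variable {R S : Type*} [CommRing R] [CommRing S] {s : ℕ}

/-- The value at `(a, b)` of the binary form of degree `s` whose coefficient of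
`a ^ i * b ^ (s - i)` is `c i`. If `c` is the list of coefficients of an irreducible polynomial with
root `z`, this is the norm of `a - b z` up to the leading coefficient. -/
def binaryForm (c : Fin (s + 1) → R) (a b : R) : R :=
  ∑ i, c i * a ^ (i : ℕ) * b ^ (s - i)

lemma binaryForm_mul_mul (c : Fin (s + 1) → R) (g a b : R) :
    binaryForm c (g * a) (g * b) = g ^ s * binaryForm c a b := by
  simp only [binaryForm, mul_sum]
  refine sum_congr rfl fun i _ => ?_
  rw [← pow_mul_pow_sub g (Fin.is_le i), mul_pow, mul_pow]
  ring

lemma map_binaryForm (f : R →+* S) (c : Fin (s + 1) → R) (a b : R) :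
    f (binaryForm c a b) = binaryForm (fun i => f (c i)) (f a) (f b) := by
  simp only [binaryForm, map_sum, map_mul, map_pow]

lemma binaryForm_four (c : Fin 4 → R) (a b : R) :
    binaryForm c a b = c 0 * b ^ 3 + c 1 * a * b ^ 2 + c 2 * a ^ 2 * b + c 3 * a ^ 3 := by
  simp [binaryForm, Fin.sum_univ_four]

lemma natDegree_binaryForm_le {c : Fin (s + 1) → R[X]} {a b : R[X]} {δ d : ℕ}
    (hc : ∀ i, (c i).natDegree ≤ δ) (ha : a.natDegree ≤ d) (hb : b.natDegree ≤ d) :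
    (binaryForm c a b).natDegree ≤ δ + s * d := by
  refine natDegree_sum_le_of_forall_le _ _ fun i _ => ?_
  calc (c i * a ^ (i : ℕ) * b ^ (s - i)).natDegree
      ≤ δ + i * d + (s - i) * d :=
        natDegree_mul_le_of_le (natDegree_mul_le_of_le (hc i) (natDegree_pow_le_of_le _ ha))
          (natDegree_pow_le_of_le _ hb)
    _ = δ + s * d := by rw [add_assoc, ← add_mul, Nat.add_sub_cancel' (Fin.is_le i)]

end BinaryForm

section NormOfLine

variable {K : Type*} [Field K] {s : ℕ}

lemma binaryForm_div_one {c : Fin (s + 1) → K} {a b : K} (hb : b ≠ 0)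
    (h : binaryForm c a b = 0) : binaryForm c (a / b) 1 = 0 := by
  refine (mul_eq_zero.1 ?_).resolve_left (pow_ne_zero s hb)
  rw [← binaryForm_mul_mul, mul_div_cancel₀ a hb, mul_one, h]

lemma exists_eq_mul_isCoprime {a b : K[X]} (hab : ¬(a = 0 ∧ b = 0)) :
    ∃ g a' b', g ≠ 0 ∧ a = g * a' ∧ b = g * b' ∧ IsCoprime a' b' := by
  classical
  let _ := EuclideanDomain.gcdMonoid K[X]
  obtain ⟨a', b', ha, hb, hcop⟩ := extract_gcd a b
  exact ⟨gcd a b, a', b', mt (gcd_eq_zero_iff a b).1 hab, ha, hb, (gcd_isUnit_iff a' b').1 hcop⟩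

-- After division by `gcd a b`, a zero of the form would specialise at `r` to a nontrivial zero.
lemma binaryForm_ne_zero_of_anisotropic_eval {c : Fin (s + 1) → K[X]} {r : K}
    (haniso : ∀ u v : K, binaryForm (fun i => (c i).eval r) u v = 0 → u = 0 ∧ v = 0)
    {a b : K[X]} (hab : ¬(a = 0 ∧ b = 0)) : binaryForm c a b ≠ 0 := by
  obtain ⟨g, a, b, hg, rfl, rfl, u, v, huv⟩ := exists_eq_mul_isCoprime hab
  rw [binaryForm_mul_mul]
  refine mul_ne_zero (pow_ne_zero s hg) fun h => ?_
  obtain ⟨ha, hb⟩ := haniso (a.eval r) (b.eval r) <| by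
    simpa [h] using (map_binaryForm (evalRingHom r) c a b).symm
  simpa [ha, hb] using congrArg (eval r) huv

lemma card_filter_le_rootMultiplicity_binaryForm [DecidableEq K] {c : Fin (s + 1) → K[X]}
    {a b : K[X]} (hN : binaryForm c a b ≠ 0) {r : K} {Z : Finset K} (hcard : #Z ≤ s)
    (hZ : ∀ z ∈ Z, binaryForm (fun i => (c i).eval r) z 1 = 0) :
    #{z ∈ Z | a.eval r - z * b.eval r = 0} ≤ (binaryForm c a b).rootMultiplicity r := by
  by_cases hb : b.eval r = 0
  · by_cases ha : a.eval r = 0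
    · obtain ⟨a, rfl⟩ := dvd_iff_isRoot.2 ha
      obtain ⟨b, rfl⟩ := dvd_iff_isRoot.2 hb
      refine (card_filter_le _ _).trans (hcard.trans ((le_rootMultiplicity_iff hN).2 ?_))
      rw [binaryForm_mul_mul]
      exact dvd_mul_right _ _
    · simp [ha, hb]
  · rcases ({z ∈ Z | a.eval r - z * b.eval r = 0}).eq_empty_or_nonempty with h | ⟨z, hz⟩
    · simp [h]
    · have hone : #{z ∈ Z | a.eval r - z * b.eval r = 0} ≤ 1 := by
        refine card_le_one.2 fun z hz w hw => mul_right_cancel₀ hb ?_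
        linear_combination (mem_filter.1 hw).2 - (mem_filter.1 hz).2
      refine hone.trans ((rootMultiplicity_pos hN).2 ?_)
      obtain ⟨hzZ, hz⟩ := mem_filter.1 hz
      calc (binaryForm c a b).eval r
          = binaryForm (fun i => (c i).eval r) (b.eval r * z) (b.eval r * 1) := by
            rw [mul_one, mul_comm, ← sub_eq_zero.1 hz]
            exact map_binaryForm (evalRingHom r) c a b
        _ = 0 := by rw [binaryForm_mul_mul, hZ z hzZ, mul_zero]

end NormOfLine

section CoverCode

variable {K : Type*} [Field K] {ι : Type*}

/-- A code has locality `r` if each coordinate of a codeword is determined by at most `r` other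
coordinates. -/
def HasLocality (C : Submodule K (ι → K)) (r : ℕ) : Prop :=
  ∀ i, ∃ I : Finset ι, i ∉ I ∧ #I ≤ r ∧ ∀ x ∈ C, ∀ y ∈ C, (∀ j ∈ I, x j = y j) → x i = y i

/-- Evaluation of the functions `a - b z` at the points `(x k, z k)`. -/
noncomputable def evalPoints (x z : ι → K) : K[X] × K[X] →ₗ[K] (ι → K) :=
  LinearMap.pi fun k => leval (x k) ∘ₗ LinearMap.fst K _ _ -
    z k • leval (x k) ∘ₗ LinearMap.snd K _ _

/-- The evaluation code of the functions `a - b z`, where `a` and `b` are polynomials in `x` of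
degree less than `t`, at the points `(x k, z k)` of a cover of the `x`-line. -/
noncomputable def coverCode (x z : ι → K) (t : ℕ) : Submodule K (ι → K) :=
  LinearMap.range (evalPoints x z ∘ₗ (degreeLT K t).subtype.prodMap (degreeLT K t).subtype)

variable {x z : ι → K} {t : ℕ}

lemma evalPoints_apply (f : K[X] × K[X]) (k : ι) :
    evalPoints x z f k = f.1.eval (x k) - z k * f.2.eval (x k) :=
  rfl

lemma exists_evalPoints_eq_of_mem_coverCode {v : ι → K} (hv : v ∈ coverCode x z t) :
    ∃ f : K[X] × K[X], f.1 ∈ degreeLT K t ∧ f.2 ∈ degreeLT K t ∧ evalPoints x z f = v := by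
  obtain ⟨f, rfl⟩ := hv
  exact ⟨(f.1, f.2), f.1.2, f.2.2, rfl⟩

lemma eval_eq_zero_of_evalPoints_eq_zero {f : K[X] × K[X]} {k l : ι} (hx : x k = x l)
    (hz : z k ≠ z l) (hk : evalPoints x z f k = 0) (hl : evalPoints x z f l = 0) :
    f.1.eval (x k) = 0 ∧ f.2.eval (x k) = 0 := by
  rw [evalPoints_apply] at hk hl
  rw [← hx] at hl
  have hb : f.2.eval (x k) = 0 := by
    refine (mul_eq_zero.1 ?_).resolve_left (sub_ne_zero.2 hz)
    linear_combination hl - hk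
  exact ⟨by simpa [hb] using hk, hb⟩

variable [Fintype ι] [DecidableEq K]

lemma finrank_coverCode (hpair : ∀ k, ∃ l, x k = x l ∧ z k ≠ z l) (ht : t ≤ #(univ.image x)) :
    Module.finrank K (coverCode x z t) = 2 * t := by
  have heq_zero {a : degreeLT K t} (ha : ∀ k, (a : K[X]).eval (x k) = 0) : a = 0 := by
    refine Subtype.ext (eq_zero_of_degree_lt_of_eval_finset_eq_zero (univ.image x) ?_ ?_)
    · exact (mem_degreeLT.1 a.2).trans_le (mod_cast ht)
    · simpa using ha
  have hinj : Function.Injective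
      (evalPoints x z ∘ₗ (degreeLT K t).subtype.prodMap (degreeLT K t).subtype) := by
    refine (injective_iff_map_eq_zero _).2 fun f hf => ?_
    have hvanish (k : ι) : (f.1 : K[X]).eval (x k) = 0 ∧ (f.2 : K[X]).eval (x k) = 0 := by
      obtain ⟨l, hx, hz⟩ := hpair k
      exact eval_eq_zero_of_evalPoints_eq_zero hx hz (congrFun hf k) (congrFun hf l)
    exact Prod.ext (heq_zero fun k => (hvanish k).1) (heq_zero fun k => (hvanish k).2)
  have : Module.Finite K (degreeLT K t) := .equiv (degreeLTEquiv K t).symm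
  rw [coverCode, LinearMap.finrank_range_of_inj hinj, Module.finrank_prod,
    (degreeLTEquiv K t).finrank_eq, Module.finrank_fin_fun, two_mul]

variable (hinj : Function.Injective fun k => (x k, z k))
include hinj

lemma hasLocality_coverCode (hfib : ∀ k, 2 < #{l | x l = x k}) :
    HasLocality (coverCode x z t) 2 := by
  classical
  intro k
  have hothers : 1 < #(({l | x l = x k} : Finset ι).erase k) := by
    rw [card_erase_of_mem (by simp)]
    exact Nat.lt_sub_of_add_lt (hfib k)
  obtain ⟨i, hi, j, hj, hij⟩ := one_lt_card.1 hothers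
  obtain ⟨hik, hxi⟩ : i ≠ k ∧ x i = x k := by simpa using hi
  obtain ⟨hjk, hxj⟩ : j ≠ k ∧ x j = x k := by simpa using hj
  have hx : x i = x j := hxi.trans hxj.symm
  have hz : z i ≠ z j := fun hz => hij (hinj (Prod.ext hx hz))
  refine ⟨{i, j}, by simp [hik.symm, hjk.symm], card_le_two, fun u hu v hv huv => ?_⟩
  obtain ⟨f, -, -, hf⟩ := exists_evalPoints_eq_of_mem_coverCode (sub_mem hu hv)
  have hzero : f.1.eval (x i) = 0 ∧ f.2.eval (x i) = 0 :=
    eval_eq_zero_of_evalPoints_eq_zero hx hz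
      (by rw [hf, Pi.sub_apply, huv i (by simp), sub_self])
      (by rw [hf, Pi.sub_apply, huv j (by simp), sub_self])
  rw [← sub_eq_zero, ← Pi.sub_apply, ← hf, evalPoints_apply, ← hxi, hzero.1, hzero.2]
  simp

variable {s δ : ℕ} {c : Fin (s + 1) → K[X]} (hfib : ∀ r, #{l | x l = r} ≤ s)
  (hcurve : ∀ k, binaryForm (fun i => (c i).eval (x k)) (z k) 1 = 0)
include hfib hcurve

lemma card_evalPoints_eq_zero_le {a b : K[X]} (hN : binaryForm c a b ≠ 0) :
    #{k | evalPoints x z (a, b) k = 0} ≤ (binaryForm c a b).natDegree := by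
  have hle : Multiset.map x ({k | evalPoints x z (a, b) k = 0} : Finset ι).val ≤
      (binaryForm c a b).roots := by
    refine Multiset.le_iff_count.2 fun r => ?_
    let Z : Finset K := ({l | x l = r} : Finset ι).image z
    have hZ : ∀ w ∈ Z, binaryForm (fun i => (c i).eval r) w 1 = 0 := by
      simpa [Z] using fun k hk => hk ▸ hcurve k
    calc Multiset.count r (Multiset.map x ({k | evalPoints x z (a, b) k = 0} : Finset ι).val)
        = #{k | evalPoints x z (a, b) k = 0 ∧ r = x k} := by
          rw [Multiset.count_map, ← filter_val, filter_filter, card_def]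
      _ ≤ #{w ∈ Z | a.eval r - w * b.eval r = 0} := by
          refine card_le_card_of_injOn z (fun k hk => ?_) fun k hk l hl hkl => ?_
          · obtain ⟨-, hzero, rfl⟩ := mem_filter.1 hk
            rw [evalPoints_apply] at hzero
            exact mem_filter.2 ⟨mem_image_of_mem z (by simp), hzero⟩
          · have hxkl : x k = x l := (mem_filter.1 hk).2.2.symm.trans (mem_filter.1 hl).2.2
            exact hinj (Prod.ext hxkl hkl)
      _ ≤ (binaryForm c a b).roots.count r := by
          rw [count_roots]
          exact card_filter_le_rootMultiplicity_binaryForm hN (card_image_le.trans (hfib r)) hZ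
  calc #{k | evalPoints x z (a, b) k = 0}
      = (Multiset.map x ({k | evalPoints x z (a, b) k = 0} : Finset ι).val).card :=
        (Multiset.card_map _ _).symm
    _ ≤ (binaryForm c a b).natDegree := (Multiset.card_le_card hle).trans (card_roots' _)

lemma card_le_weight_add_of_mem_coverCode (hc : ∀ i, (c i).natDegree ≤ δ) {r : K}
    (haniso : ∀ u v : K, binaryForm (fun i => (c i).eval r) u v = 0 → u = 0 ∧ v = 0)
    {v : ι → K} (hv : v ∈ coverCode x z t) (hv0 : v ≠ 0) :
    Fintype.card ι + s ≤ Nat.card {k // v k ≠ 0} + (δ + s * t) := by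
  obtain ⟨⟨a, b⟩, ha, hb, rfl⟩ := exists_evalPoints_eq_of_mem_coverCode hv
  have hab : ¬(a = 0 ∧ b = 0) := by
    rintro ⟨rfl, rfl⟩
    exact hv0 (map_zero _)
  obtain _ | d := t
  · exact absurd (by simpa [mem_degreeLT] using And.intro ha hb) hab
  rw [degreeLT_succ_eq_degreeLE, mem_degreeLE, ← natDegree_le_iff_degree_le] at ha hb
  have hzeros : #{k | evalPoints x z (a, b) k = 0} ≤ δ + s * d :=
    (card_evalPoints_eq_zero_le hinj hfib hcurve
      (binaryForm_ne_zero_of_anisotropic_eval haniso hab)).trans (natDegree_binaryForm_le hc ha hb)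
  have hsplit := card_filter_add_card_filter_not (s := univ) fun k => evalPoints x z (a, b) k = 0
  rw [card_univ] at hsplit
  rw [Nat.card_eq_fintype_card, Fintype.card_subtype, mul_add_one]
  simp only [ne_eq]
  lia

end CoverCode

lemma card_filter_fst_eq {α β ι : Type*} [Fintype ι] [Fintype β] [DecidableEq α] (e : ι ≃ α × β)
    (i : α) : #{k | (e k).1 = i} = Fintype.card β := by
  rw [← card_univ]
  refine card_nbij' (fun k => (e k).2) (fun b => e.symm (i, b)) (by simp) (by simp) ?_ ?_
  · intro k hk
    rw [coe_filter, Set.mem_ofPred_eq] at hk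
    simp [← hk.2]
  · simp [Set.RightInvOn, Set.LeftInvOn]

theorem exists_code_of_split_fibers {K ι : Type*} [Field K] [Fintype ι] {s δ t : ℕ} (hs : 2 < s)
    {c : Fin (s + 1) → K[X]} (hc : ∀ i, (c i).natDegree ≤ δ) {r : K}
    (haniso : ∀ u v : K, binaryForm (fun i => (c i).eval r) u v = 0 → u = 0 ∧ v = 0)
    {Λ : Finset K} (hsplit : ∀ x ∈ Λ, ∃ Z : Fin s → K, Function.Injective Z ∧
      ∀ j, binaryForm (fun i => (c i).eval x) (Z j) 1 = 0)
    (ht : t ≤ #Λ) (e : ι ≃ Λ × Fin s) :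
    ∃ C : Submodule K (ι → K), Module.finrank K C = 2 * t ∧
      (∀ v ∈ C, v ≠ 0 → Fintype.card ι + s ≤ Nat.card {k // v k ≠ 0} + (δ + s * t)) ∧
      HasLocality C 2 := by
  classical
  choose Z hZinj hZ using fun x : Λ => hsplit x x.2
  let x (k : ι) : K := (e k).1
  let z (k : ι) : K := Z (e k).1 (e k).2
  have hinj : Function.Injective fun k => (x k, z k) := fun k l hkl => by
    obtain ⟨hx, hz⟩ := Prod.mk.inj hkl
    have hfst : (e k).1 = (e l).1 := Subtype.ext hx
    exact e.injective (Prod.ext hfst (hZinj (e l).1 (by simpa [z, hfst] using hz)))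
  have hcard (k : ι) : #{l | x l = x k} = s := by
    simpa [x, Subtype.coe_inj] using card_filter_fst_eq e (e k).1
  have hpair (k : ι) : ∃ l, x k = x l ∧ z k ≠ z l := by
    have : Nontrivial (Fin s) := Fin.nontrivial_iff_two_le.2 hs.le
    obtain ⟨j, hj⟩ := exists_ne (e k).2
    exact ⟨e.symm ((e k).1, j), by simp [x], by simpa [z] using (hZinj _).ne hj.symm⟩
  have himage : Λ ⊆ univ.image x := fun y hy =>
    mem_image.2 ⟨e.symm (⟨y, hy⟩, ⟨0, by lia⟩), mem_univ _, by simp [x]⟩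
  have hfib (y : K) : #{l | x l = y} ≤ s := by
    by_cases hy : ∃ k, x k = y
    · obtain ⟨k, rfl⟩ := hy
      exact (hcard k).le
    · simp [not_exists.1 hy]
  exact ⟨coverCode x z t, finrank_coverCode hpair (ht.trans (card_le_card himage)),
    fun v => card_le_weight_add_of_mem_coverCode hinj hfib (fun k => hZ _ _) hc haniso,
    hasLocality_coverCode hinj fun k => hs.trans_eq (hcard k).symm⟩

section Shanks

/-- The coefficients of the homogenized Shanks cubic `q z ^ 3 - p z ^ 2 - (p + 3 q) z - q`, in
increasing order; it defines a cyclic cubic extension with parameter `f = p / q`. -/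
def shanks {R : Type*} [CommRing R] (p q : R) : Fin 4 → R :=
  ![-q, -(p + 3 * q), -p, q]

section CommRing

variable {R S : Type*} [CommRing R] [CommRing S]

lemma map_shanks (f : R →+* S) (p q : R) (i : Fin 4) :
    f (shanks p q i) = shanks (f p) (f q) i := by
  fin_cases i <;> simp [shanks, map_ofNat]

lemma binaryForm_eval_shanks (p q : R[X]) (r a b : R) :
    binaryForm (fun i => (shanks p q i).eval r) a b =
      binaryForm (shanks (p.eval r) (q.eval r)) a b := by
  simp only [← coe_evalRingHom, map_shanks]

lemma binaryForm_shanks (p q a b : R) :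
    binaryForm (shanks p q) a b =
      q * a ^ 3 - p * a ^ 2 * b - (p + 3 * q) * a * b ^ 2 - q * b ^ 3 := by
  simp only [binaryForm_four, shanks, Matrix.cons_val]
  ring

-- The order 3 substitution behind the cyclic Galois group.
lemma binaryForm_shanks_neg_add (p q a b : R) :
    binaryForm (shanks p q) (-b) (a + b) = -binaryForm (shanks p q) a b := by
  simp only [binaryForm_shanks]
  ring

lemma natDegree_shanks_le {p q : R[X]} {δ : ℕ} (hp : p.natDegree ≤ δ) (hq : q.natDegree ≤ δ)
    (i : Fin 4) : (shanks p q i).natDegree ≤ δ := by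
  have h3q : (3 * q).natDegree ≤ δ := by
    simpa using natDegree_mul_le_of_le (natDegree_ofNat 3).le hq
  fin_cases i
  · simpa [shanks] using hq
  · exact (natDegree_neg _).trans_le (natDegree_add_le_of_degree_le hp h3q)
  · simpa [shanks] using hp
  · simpa [shanks] using hq

end CommRing

variable {K : Type*} [Field K]

lemma exists_injective_binaryForm_shanks_eq_zero {p q z : K} (hq : q ≠ 0)
    (hz : binaryForm (shanks p q) z 1 = 0) (hfix : z ^ 2 + z + 1 ≠ 0) :
    ∃ Z : Fin 3 → K, Function.Injective Z ∧ ∀ j, binaryForm (shanks p q) (Z j) 1 = 0 := by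
  have hz0 : z ≠ 0 := by
    rintro rfl
    exact hq (by simpa [binaryForm_shanks] using hz)
  have hz1 : z + 1 ≠ 0 := by
    intro h
    obtain rfl := eq_neg_of_add_eq_zero_left h
    rw [binaryForm_shanks] at hz
    exact hq (by linear_combination hz)
  have hroot₁ : binaryForm (shanks p q) (-1) (z + 1) = 0 := by
    rw [binaryForm_shanks_neg_add, hz, neg_zero]
  have hroot₂ : binaryForm (shanks p q) (-(z + 1)) z = 0 := by
    calc binaryForm (shanks p q) (-(z + 1)) z
        = binaryForm (shanks p q) (-(z + 1)) (-1 + (z + 1)) := by congr 1; ring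
      _ = 0 := by rw [binaryForm_shanks_neg_add, hroot₁, neg_zero]
  have hne₁ : z ≠ -1 / (z + 1) := fun h => hfix <| by
    linear_combination (eq_div_iff hz1).1 h
  have hne₂ : z ≠ -(z + 1) / z := fun h => hfix <| by
    linear_combination (eq_div_iff hz0).1 h
  have hne₃ : -1 / (z + 1) ≠ -(z + 1) / z := fun h => hfix <| by
    linear_combination (div_eq_div_iff hz1 hz0).1 h
  refine ⟨![z, -1 / (z + 1), -(z + 1) / z], fun i j => ?_, fun j => ?_⟩
  · fin_cases i <;> fin_cases j <;>
      simp [hne₁, hne₂, hne₃, hne₁.symm, hne₂.symm, hne₃.symm, -neg_add_rev]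
  · fin_cases j
    exacts [hz, binaryForm_div_one hz1 hroot₁, binaryForm_div_one hz0 hroot₂]

end Shanks

section CharTwo

variable {R : Type*} [CommRing R] [CharP R 2]

lemma sum_range_sq_add_self_pow_two_pow (x : R) (n : ℕ) :
    ∑ i ∈ range n, (x ^ 2 + x) ^ 2 ^ i = x ^ 2 ^ n + x := by
  induction n with
  | zero => simp [CharTwo.add_self_eq_zero]
  | succ n ih =>
    rw [sum_range_succ, ih, add_pow_char_pow, ← pow_mul, ← pow_succ']
    linear_combination x ^ 2 ^ n * CharTwo.two_eq_zero (R := R)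

lemma binaryForm_shanks_sq_add_self {p q j : R} (hq : q = j * p)
    (hj : j ^ 5 + j ^ 4 + j ^ 3 + j + 1 = 0) :
    binaryForm (shanks p q) (j ^ 2 + j) 1 = 0 := by
  calc binaryForm (shanks p q) (j ^ 2 + j) 1
      = p * j ^ 2 * (j ^ 5 + j ^ 4 + j ^ 3 + j + 1) := by
        rw [binaryForm_shanks, hq]
        grind
    _ = 0 := by rw [hj, mul_zero]

end CharTwo

/-- The Shanks cubic with parameter `f = 1 / j`, where `j = (x ^ 2 + x + 1) ^ 3 / (x ^ 2 + x) ^ 2`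
generates the invariants of the permutation group of `{0, 1, ∞}` in characteristic 2 (the
`j`-invariant of the Legendre curve with parameter `x`, without its factor `2 ^ 8`). -/
noncomputable def invJCubic (R : Type*) [CommRing R] : Fin 4 → R[X] :=
  shanks ((X ^ 2 + X) ^ 2) ((X ^ 2 + X + 1) ^ 3)

lemma natDegree_invJCubic_le (R : Type*) [CommRing R] (i : Fin 4) :
    (invJCubic R i).natDegree ≤ 6 :=
  natDegree_shanks_le (by compute_degree!) (by compute_degree!) i

section FieldOfCardThirtyTwo

variable {K : Type*} [Field K] [CharP K 2]

lemma quintic_eq_zero_of_trace_eq_zero {y j : K} (hy : y ≠ 0) (hj : y ^ 2 * j = (y + 1) ^ 3)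
    (htr : ∑ i ∈ range 5, y ^ 2 ^ i = 0) : j ^ 5 + j ^ 4 + j ^ 3 + j + 1 = 0 := by
  refine (mul_eq_zero.1 ?_).resolve_left (pow_ne_zero 11 hy)
  calc y ^ 11 * (j ^ 5 + j ^ 4 + j ^ 3 + j + 1)
      = y * ((y ^ 2 * j) ^ 5 + (y ^ 2 * j) ^ 4 * y ^ 2 + (y ^ 2 * j) ^ 3 * y ^ 4
          + (y ^ 2 * j) * y ^ 8 + y ^ 10) := by ring
    _ = y + y ^ 2 + y ^ 4 + y ^ 8 + y ^ 16 := by rw [hj]; grind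
    _ = 0 := by simpa [sum_range_succ] using htr

lemma sq_add_self_add_one_ne_zero {z : K} (hz : z ^ 32 = z) : z ^ 2 + z + 1 ≠ 0 := by
  intro h
  have hz3 : z ^ 3 = 1 := by linear_combination (z - 1) * h
  have hz2 : z ^ 2 = z := by
    calc z ^ 2 = (z ^ 3) ^ 10 * z ^ 2 := by rw [hz3, one_pow, one_mul]
      _ = z := by rw [← pow_mul, ← pow_add, hz]
  exact one_ne_zero (α := K) (by linear_combination h - hz2 - z * CharTwo.two_eq_zero (R := K))

lemma cube_add_self_add_one_ne_zero {z : K} (hz : z ^ 32 = z) : z ^ 3 + z + 1 ≠ 0 := by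
  intro h
  have hz7 : z ^ 7 = 1 := by grind
  have hz4 : z ^ 4 = z := by
    calc z ^ 4 = (z ^ 7) ^ 4 * z ^ 4 := by rw [hz7, one_pow, one_mul]
      _ = z := by rw [← pow_mul, ← pow_add, hz]
  have hz2 : z ^ 2 = 0 := by
    linear_combination z * h - hz4 - z * CharTwo.two_eq_zero (R := K)
  simp [pow_eq_zero_iff two_ne_zero |>.1 hz2] at h

variable (hfrob : ∀ x : K, x ^ 32 = x)
include hfrob

lemma invJCubic_anisotropic_zero (u v : K)
    (h : binaryForm (fun i => (invJCubic K i).eval 0) u v = 0) : u = 0 ∧ v = 0 := by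
  rw [invJCubic, binaryForm_eval_shanks] at h
  have hv : v = 0 := by
    by_contra hv
    have hroot := binaryForm_div_one hv h
    refine cube_add_self_add_one_ne_zero (hfrob (u / v)) ?_
    simp only [binaryForm_shanks, eval_add, eval_pow, eval_X, eval_one] at hroot
    grind
  subst hv
  simpa [binaryForm_shanks] using h

lemma invJCubic_splits {x : K} (hx0 : x ≠ 0) (hx1 : x ≠ 1) :
    ∃ Z : Fin 3 → K, Function.Injective Z ∧
      ∀ i, binaryForm (fun j => (invJCubic K j).eval x) (Z i) 1 = 0 := by
  have hy : x ^ 2 + x ≠ 0 := by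
    rw [pow_two, ← mul_add_one]
    exact mul_ne_zero hx0 (mt CharTwo.add_eq_zero.1 hx1)
  have htr : ∑ i ∈ range 5, (x ^ 2 + x) ^ 2 ^ i = 0 := by
    rw [sum_range_sq_add_self_pow_two_pow]
    norm_num [hfrob, CharTwo.add_self_eq_zero]
  have hq : (x ^ 2 + x + 1) ^ 3 ≠ 0 :=
    pow_ne_zero 3 (sq_add_self_add_one_ne_zero (hfrob x))
  let j := (x ^ 2 + x + 1) ^ 3 / (x ^ 2 + x) ^ 2
  have hj : (x ^ 2 + x + 1) ^ 3 = j * (x ^ 2 + x) ^ 2 :=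
    (div_mul_cancel₀ _ (pow_ne_zero 2 hy)).symm
  have hroot := binaryForm_shanks_sq_add_self hj
    (quintic_eq_zero_of_trace_eq_zero hy (by rw [hj, mul_comm]) htr)
  simpa [invJCubic, binaryForm_eval_shanks] using
    exists_injective_binaryForm_shanks_eq_zero hq hroot (sq_add_self_add_one_ne_zero (hfrob _))

end FieldOfCardThirtyTwo

theorem exists_LRC_F32_length87_general {K : Type*} [Field K] (hK : Nat.card K = 32) {m t : ℕ}
    (hm : m ≤ 30) (ht : t ≤ m) :
    ∃ C : Submodule K (Fin (3 * m) → K), Module.finrank K C = 2 * t ∧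
      (∀ v ∈ C, v ≠ 0 → 3 * m ≤ Nat.card {i // v i ≠ 0} + (3 * t + 3)) ∧ HasLocality C 2 := by
  classical
  have : Finite K := Nat.finite_of_card_ne_zero (by lia)
  let _ := Fintype.ofFinite K
  rw [Nat.card_eq_fintype_card] at hK
  have : CharP K 2 := charP_of_card_eq_prime_pow (f := 5) hK
  have hfrob (x : K) : x ^ 32 = x := hK ▸ FiniteField.pow_card x
  have hcard : #({0, 1}ᶜ : Finset K) = 30 := by rw [card_compl, hK, card_pair zero_ne_one]
  obtain ⟨Λ, hΛ, rfl⟩ := exists_subset_card_eq (hm.trans_eq hcard.symm)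
  have e : Fin (3 * #Λ) ≃ Λ × Fin 3 := Fintype.equivOfCardEq (by simp [mul_comm])
  have hsplit (x : K) (hx : x ∈ Λ) := by
    have : x ≠ 0 ∧ x ≠ 1 := by simpa using hΛ hx
    exact invJCubic_splits hfrob this.1 this.2
  obtain ⟨C, hdim, hweight, hloc⟩ := exists_code_of_split_fibers (by lia)
    (natDegree_invJCubic_le K) (invJCubic_anisotropic_zero hfrob) hsplit ht e
  refine ⟨C, hdim, fun v hv hv0 => ?_, hloc⟩
  have := hweight v hv hv0
  rw [Fintype.card_fin] at this
  lia

theorem exists_LRC_F32_length87 :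
    ∀ t : ℕ, 1 ≤ t → t ≤ 28 →
      ∃ C : Submodule (GaloisField 2 5) (Fin 87 → GaloisField 2 5),
        Module.finrank (GaloisField 2 5) C = 2 * t ∧
        (∀ x : Fin 87 → GaloisField 2 5, x ∈ C → x ≠ 0 →
          84 - 3 * t ≤ Nat.card {i : Fin 87 // x i ≠ 0}) ∧
        (∀ i : Fin 87, ∃ I : Finset (Fin 87), i ∉ I ∧ I.card ≤ 2 ∧
          ∀ x ∈ C, ∀ y ∈ C, (∀ j ∈ I, x j = y j) → x i = y i) := by
  intro t _ ht
  obtain ⟨C, hdim, hweight, hloc⟩ := exists_LRC_F32_length87_general (m := 29)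
    (GaloisField.card 2 5 (by decide)) (by decide) (ht.trans (by decide))
  exact ⟨C, hdim, fun x hx hx0 => by have := hweight x hx hx0; lia, hloc⟩
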